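/- arXiv:2206.04247 — 2 statements merged into one kernel-verified Lean document; each statement's English description precedes it below -/
import Mathlib

section
/- Let N ≥ 3, μ₁ < N-2 and -(N-2-μ₁)²/4 ≤ μ₂ < 0, so that τ₊ < 0. Let u ∈ C²(B̄₁ \ {0}) be a positive function satisfying ℒ_{μ₁,μ₂}u ≥ 0 in B₁ \ {0} and u ≥ t₁ on ∂B₁ for some constant t₁ > 0. Then u(x) ≥ t₁ ( |x|^{τ₊} - 1 ) for all x ∈ B₁ \ {0}. -/
open MeasureTheory Filter Metric Set Topology

noncomputable section

/-- Euclidean space `ℝ^N`. -/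
abbrev E (N : ℕ) := EuclideanSpace ℝ (Fin N)

/-- The Laplacian, as the sum of second derivatives in the coordinate directions. -/
def lap (N : ℕ) (u : E N → ℝ) (x : E N) : ℝ :=
  ∑ i, fderiv ℝ (fun y => fderiv ℝ u y (EuclideanSpace.single i 1)) x (EuclideanSpace.single i 1)

/-- The CKN operator `ℒ_{μ₁,μ₂} u = -Δu + μ₁|x|⁻² x·∇u + μ₂|x|⁻² u`. -/
def ckn (N : ℕ) (μ₁ μ₂ : ℝ) (u : E N → ℝ) (x : E N) : ℝ :=
  -lap N u x + μ₁ / ‖x‖ ^ 2 * fderiv ℝ u x x + μ₂ / ‖x‖ ^ 2 * u x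

/-- `τ₊(μ₁,μ₂)`. -/
def tauPlus (N : ℕ) (μ₁ μ₂ : ℝ) : ℝ :=
  ((2 - (N : ℝ) + μ₁) + Real.sqrt ((2 - (N : ℝ) + μ₁) ^ 2 + 4 * μ₂)) / 2

/-- `τ₋(μ₁,μ₂)`. -/
def tauMinus (N : ℕ) (μ₁ μ₂ : ℝ) : ℝ :=
  ((2 - (N : ℝ) + μ₁) - Real.sqrt ((2 - (N : ℝ) + μ₁) ^ 2 + 4 * μ₂)) / 2

/-- Surface measure of the unit sphere `𝕊^{N-1}` in `ℝ^N`. -/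
def sphereArea (N : ℕ) : ℝ := N * (volume (ball (0 : E N) 1)).toReal

/-- Local β-Hölder continuity of `f` on a set `s`. -/
def LocHolderOn (N : ℕ) (β : ℝ) (f : E N → ℝ) (s : Set (E N)) : Prop :=
  ∀ x ∈ s, ∃ t ∈ nhdsWithin x s, ∃ C : NNReal, HolderOnWith C β.toNNReal f t

/-- Necessary second order condition at a local minimum, one variable. -/
lemma second_deriv_nonneg_of_isLocalMin {g : ℝ → ℝ} {x : ℝ} (hmin : IsLocalMin g x)
    (hc : ContinuousAt g x) : 0 ≤ deriv (deriv g) x := by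
  by_contra hneg
  push Not at hneg
  have h0 : deriv g x = 0 := hmin.deriv_eq_zero
  have hmax : IsLocalMax g x := isLocalMax_of_deriv_deriv_neg hneg h0 hc
  have hev : g =ᶠ[𝓝 x] fun _ => g x := by
    filter_upwards [hmin, hmax] with y h1 h2
    exact le_antisymm h2 h1
  have h1 : deriv g =ᶠ[𝓝 x] deriv (fun _ => g x) := hev.deriv
  have h2 := h1.deriv_eq
  simp at h2
  linarith

/-- Second order condition along a direction in a normed space. -/
lemma second_fderiv_nonneg {N : ℕ} {f : E N → ℝ} {x : E N} (hf : ContDiffAt ℝ 2 f x)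
    (hmin : IsLocalMin f x) (e : E N) :
    0 ≤ fderiv ℝ (fun y => fderiv ℝ f y e) x e := by
  set ℓ : ℝ → E N := fun t => x + t • e with hℓ
  have hℓ0 : ℓ 0 = x := by simp [hℓ]
  have hℓd : ∀ t, HasDerivAt ℓ e t := by
    intro t
    have h := ((hasDerivAt_id t).smul_const e).const_add x
    rw [one_smul] at h
    exact h
  have hℓc : ContinuousAt ℓ 0 := (hℓd 0).continuousAt
  have hℓt : Tendsto ℓ (𝓝 0) (𝓝 x) := by
    have := hℓc.tendsto
    rwa [hℓ0] at this
  have hdiff : ∀ᶠ y in 𝓝 x, DifferentiableAt ℝ f y := by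
    filter_upwards [hf.eventually (by simp)] with y hy
    exact hy.differentiableAt (by norm_num)
  have hd1 : deriv (fun t => f (ℓ t)) =ᶠ[𝓝 0] fun t => fderiv ℝ f (ℓ t) e := by
    filter_upwards [hℓt.eventually hdiff] with t ht
    exact (ht.hasFDerivAt.comp_hasDerivAt t (hℓd t)).deriv
  have hfd : DifferentiableAt ℝ (fun y => fderiv ℝ f y e) x := by
    have h1 : ContDiffAt ℝ 1 (fderiv ℝ f) x := hf.fderiv_right (by norm_num)
    exact (h1.differentiableAt (by norm_num)).clm_apply (differentiableAt_const e)
  have hd2 : deriv (deriv (fun t => f (ℓ t))) 0 = fderiv ℝ (fun y => fderiv ℝ f y e) x e := by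
    rw [hd1.deriv_eq]
    have h2 : HasFDerivAt (fun y => fderiv ℝ f y e) (fderiv ℝ (fun y => fderiv ℝ f y e) x) (ℓ 0) := by
      rw [hℓ0]; exact hfd.hasFDerivAt
    exact (h2.comp_hasDerivAt 0 (hℓd 0)).deriv
  rw [← hd2]
  apply second_deriv_nonneg_of_isLocalMin
  · have : ∀ᶠ t in 𝓝 (0 : ℝ), f x ≤ f (ℓ t) := hℓt.eventually hmin
    filter_upwards [this] with t ht
    rw [hℓ0]; exact ht
  · have : ContinuousAt f (ℓ 0) := by rw [hℓ0]; exact hf.continuousAt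
    exact ContinuousAt.comp this hℓc

/-- At a touching point from below, the operator of `u` is at most that of the test function. -/
lemma ckn_le_of_touch {N : ℕ} (μ₁ μ₂ : ℝ) {u ψ : E N → ℝ} {x : E N} (hu : ContDiffAt ℝ 2 u x)
    (hψ : ContDiffAt ℝ 2 ψ x) (heq : u x = ψ x) (hle : ∀ᶠ y in 𝓝 x, ψ y ≤ u y) :
    ckn N μ₁ μ₂ u x ≤ ckn N μ₁ μ₂ ψ x := by
  have hf : ContDiffAt ℝ 2 (fun y => u y - ψ y) x := hu.sub hψ
  have hmin : IsLocalMin (fun y => u y - ψ y) x := by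
    filter_upwards [hle] with y hy
    simp only [heq]; linarith
  have hdu : DifferentiableAt ℝ u x := hu.differentiableAt (by norm_num)
  have hdψ : DifferentiableAt ℝ ψ x := hψ.differentiableAt (by norm_num)
  have hgrad : fderiv ℝ u x = fderiv ℝ ψ x := by
    have := hmin.fderiv_eq_zero
    rw [fderiv_fun_sub hdu hdψ] at this
    exact sub_eq_zero.mp this
  have hlap : lap N ψ x ≤ lap N u x := by
    unfold lap
    apply Finset.sum_le_sum
    intro i _
    set e : E N := EuclideanSpace.single i 1
    have h1 := second_fderiv_nonneg hf hmin e
    have hev : (fun y => fderiv ℝ (fun y => u y - ψ y) y e) =ᶠ[𝓝 x]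
        fun y => fderiv ℝ u y e - fderiv ℝ ψ y e := by
      filter_upwards [hu.eventually (by simp), hψ.eventually (by simp)] with y h1 h2
      rw [fderiv_fun_sub (h1.differentiableAt (by norm_num)) (h2.differentiableAt (by norm_num))]
      rfl
    have hd : ∀ {w : E N → ℝ}, ContDiffAt ℝ 2 w x →
        DifferentiableAt ℝ (fun y => fderiv ℝ w y e) x := by
      intro w hw
      have h1 : ContDiffAt ℝ 1 (fderiv ℝ w) x := hw.fderiv_right (by norm_num)
      exact (h1.differentiableAt (by norm_num)).clm_apply (differentiableAt_const e)
    rw [hev.fderiv_eq, fderiv_fun_sub (hd hu) (hd hψ)] at h1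
    simpa using h1
  unfold ckn
  rw [hgrad, heq]
  linarith

/-- The operator on radial functions `F(|x|²)`. -/
lemma ckn_radial {N : ℕ} (μ₁ μ₂ : ℝ) {F F1 F2 : ℝ → ℝ}
    (h1 : ∀ q, 0 < q → HasDerivAt F (F1 q) q) (h2 : ∀ q, 0 < q → HasDerivAt F1 (F2 q) q)
    {x : E N} (hx : x ≠ 0) :
    ckn N μ₁ μ₂ (fun y => F (‖y‖ ^ 2)) x =
      -(4 * ‖x‖ ^ 2 * F2 (‖x‖ ^ 2) + 2 * N * F1 (‖x‖ ^ 2)) + 2 * μ₁ * F1 (‖x‖ ^ 2)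
        + μ₂ / ‖x‖ ^ 2 * F (‖x‖ ^ 2) := by
  have hq : ∀ y : E N, y ≠ 0 → 0 < ‖y‖ ^ 2 := fun y hy => by positivity
  have hn : ∀ y : E N, HasFDerivAt (fun y : E N => ‖y‖ ^ 2) (2 • innerSL ℝ y) y := fun y =>
    (hasStrictFDerivAt_norm_sq y).hasFDerivAt
  have hd : ∀ y : E N, y ≠ 0 → ∀ v : E N,
      fderiv ℝ (fun y : E N => F (‖y‖ ^ 2)) y v = F1 (‖y‖ ^ 2) * (2 * inner ℝ y v) := by
    intro y hy v
    have := (h1 _ (hq y hy)).comp_hasFDerivAt y (hn y)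
    have h3 : fderiv ℝ (fun y : E N => F (‖y‖ ^ 2)) y = F1 (‖y‖ ^ 2) • (2 • innerSL ℝ y) :=
      this.fderiv
    rw [h3]; simp
  have hlap : lap N (fun y => F (‖y‖ ^ 2)) x =
      4 * ‖x‖ ^ 2 * F2 (‖x‖ ^ 2) + 2 * N * F1 (‖x‖ ^ 2) := by
    unfold lap
    have key : ∀ i : Fin N, fderiv ℝ (fun y => fderiv ℝ (fun y : E N => F (‖y‖ ^ 2)) y
        (EuclideanSpace.single i 1)) x (EuclideanSpace.single i 1) =
        4 * F2 (‖x‖ ^ 2) * (x i) ^ 2 + 2 * F1 (‖x‖ ^ 2) := by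
      intro i
      set e : E N := EuclideanSpace.single i 1 with he
      have hev : (fun y => fderiv ℝ (fun y : E N => F (‖y‖ ^ 2)) y e) =ᶠ[𝓝 x]
          fun y => F1 (‖y‖ ^ 2) * (2 * innerSL ℝ e y) := by
        filter_upwards [isOpen_ne.mem_nhds hx] with y hy
        rw [hd y hy e, innerSL_apply_apply, real_inner_comm]
      rw [hev.fderiv_eq]
      have ha : HasFDerivAt (fun y : E N => F1 (‖y‖ ^ 2)) (F2 (‖x‖ ^ 2) • (2 • innerSL ℝ x)) x :=
        (h2 _ (hq x hx)).comp_hasFDerivAt x (hn x)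
      have hb : HasFDerivAt (fun y : E N => 2 * innerSL ℝ e y) ((2 : ℝ) • innerSL ℝ e) x :=
        (innerSL ℝ e).hasFDerivAt.const_mul 2
      have hab : fderiv ℝ (fun y : E N => F1 (‖y‖ ^ 2) * (2 * innerSL ℝ e y)) x = _ :=
        (ha.mul hb).fderiv
      rw [hab]
      have e1 : inner ℝ e x = x i := by simp [he, EuclideanSpace.inner_single_left]
      have e2 : inner ℝ x e = x i := by rw [real_inner_comm, e1]
      have e3 : inner ℝ e e = (1 : ℝ) := by simp [he]
      simp only [ContinuousLinearMap.add_apply, ContinuousLinearMap.smul_apply, innerSL_apply_apply,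
        e1, e2, e3, smul_eq_mul, nsmul_eq_mul]
      push_cast
      ring
    rw [Finset.sum_congr rfl (fun i _ => key i), Finset.sum_add_distrib, ← Finset.mul_sum,
      ← EuclideanSpace.real_norm_sq_eq]
    simp
    ring
  unfold ckn
  rw [hlap, hd x hx, real_inner_self_eq_norm_sq]
  have := (hq x hx).ne'
  field_simp

/-- The barrier is a strict subsolution. -/
lemma barrier_neg {N : ℕ} {μ₁ μ₂ : ℝ} (hμ₂l : -((N : ℝ) - 2 - μ₁) ^ 2 / 4 ≤ μ₂)
    (c ε : ℝ) (hε : 0 < ε) {x : E N} (hx : x ≠ 0) :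
    ckn N μ₁ μ₂ (fun y => (‖y‖ ^ 2) ^ (tauPlus N μ₁ μ₂ / 2) *
      (c + ε * Real.log (‖y‖ ^ 2) + ε * ‖y‖ ^ 2)) x < 0 := by
  set s := Real.sqrt ((2 - (N : ℝ) + μ₁) ^ 2 + 4 * μ₂) with hs
  have hs0 : 0 ≤ s := Real.sqrt_nonneg _
  have hs2 : s ^ 2 = (2 - (N : ℝ) + μ₁) ^ 2 + 4 * μ₂ := Real.sq_sqrt (by nlinarith)
  set a := tauPlus N μ₁ μ₂ / 2 with ha
  have has : s = 4 * a - (2 - (N : ℝ) + μ₁) := by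
    rw [ha, tauPlus, ← hs]; ring
  have hquad : -4 * a ^ 2 + 4 * a + 2 * (μ₁ - N) * a + μ₂ = 0 := by
    rw [has] at hs2; nlinarith
  have h1 : ∀ q : ℝ, 0 < q → HasDerivAt (fun q => q ^ a * (c + ε * Real.log q + ε * q))
      (q ^ (a - 1) * (a * (c + ε * Real.log q + ε * q) + ε * (1 + q))) q := by
    intro q hq
    have hp := Real.hasDerivAt_rpow_const (x := q) (p := a) (Or.inl hq.ne')
    have hl := (((Real.hasDerivAt_log hq.ne').const_mul ε).const_add c).add
      ((hasDerivAt_id q).const_mul ε)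
    refine (hp.mul hl).congr_deriv ?_
    have : q ^ a = q ^ (a - 1) * q := by rw [Real.rpow_sub_one hq.ne']; field_simp
    simp only [Pi.add_apply, id]
    rw [this]; field_simp; try ring
  have h2 : ∀ q : ℝ, 0 < q → HasDerivAt
      (fun q => q ^ (a - 1) * (a * (c + ε * Real.log q + ε * q) + ε * (1 + q)))
      (q ^ (a - 1) / q * ((a - 1) * (a * (c + ε * Real.log q + ε * q) + ε * (1 + q))
        + a * ε * (1 + q) + ε * q)) q := by
    intro q hq
    have hp := Real.hasDerivAt_rpow_const (x := q) (p := a - 1) (Or.inl hq.ne')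
    have hl := ((((Real.hasDerivAt_log hq.ne').const_mul ε).const_add c).add
      ((hasDerivAt_id q).const_mul ε)).const_mul a
    have hl2 := hl.add (((hasDerivAt_id q).const_add 1).const_mul ε)
    refine (hp.mul hl2).congr_deriv ?_
    simp only [Pi.add_apply, id]
    rw [Real.rpow_sub_one hq.ne' (a - 1)]; field_simp; try ring
  rw [ckn_radial μ₁ μ₂ h1 h2 hx]
  have hq : 0 < ‖x‖ ^ 2 := by positivity
  generalize ‖x‖ ^ 2 = q at hq
  have hqa : q ^ a = q ^ (a - 1) * q := by rw [Real.rpow_sub_one hq.ne']; field_simp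
  rw [hqa]
  have hA : 0 < q ^ (a - 1) := Real.rpow_pos_of_pos hq _
  generalize q ^ (a - 1) = A at hA
  generalize Real.log q = L
  have : -(4 * q * (A / q * ((a - 1) * (a * (c + ε * L + ε * q) + ε * (1 + q))
        + a * ε * (1 + q) + ε * q)) + 2 * N * (A * (a * (c + ε * L + ε * q) + ε * (1 + q))))
        + 2 * μ₁ * (A * (a * (c + ε * L + ε * q) + ε * (1 + q)))
        + μ₂ / q * (A * q * (c + ε * L + ε * q)) =
      A * ((-4 * a ^ 2 + 4 * a + 2 * (μ₁ - N) * a + μ₂) * (c + ε * L + ε * q)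
        - 2 * s * (ε * (1 + q)) - 4 * ε * q) := by
    rw [has]; field_simp; ring
  rw [this, hquad]
  have : 0 ≤ s * (ε * (1 + q)) := by positivity
  have : 0 < ε * q := by positivity
  apply mul_neg_of_pos_of_neg hA
  linarith

theorem stmt14 (N : ℕ) (hN : 3 ≤ N) (μ₁ μ₂ : ℝ) (hμ₁ : μ₁ < (N : ℝ) - 2)
    (hμ₂l : -((N : ℝ) - 2 - μ₁) ^ 2 / 4 ≤ μ₂) (hμ₂u : μ₂ < 0)
    (u : E N → ℝ) (t₁ : ℝ) (ht₁ : 0 < t₁)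
    (hreg : ContDiffOn ℝ 2 u (closure (ball (0 : E N) 1) \ {0}))
    (hpos : ∀ x ∈ closure (ball (0 : E N) 1) \ {0}, 0 < u x)
    (hsuper : ∀ x ∈ ball (0 : E N) 1 \ {0}, 0 ≤ ckn N μ₁ μ₂ u x)
    (hbdry : ∀ x ∈ sphere (0 : E N) 1, t₁ ≤ u x) :
    ∀ x ∈ ball (0 : E N) 1 \ {0}, t₁ * (‖x‖ ^ tauPlus N μ₁ μ₂ - 1) ≤ u x := by
  rw [closure_ball (0 : E N) one_ne_zero] at hreg hpos
  set a := tauPlus N μ₁ μ₂ / 2 with ha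
  -- the key comparison for every positive ε
  have key : ∀ ε : ℝ, 0 < ε → ∀ x ∈ ball (0 : E N) 1 \ {0},
      0 ≤ u x * (‖x‖ ^ 2) ^ (-a) - t₁ + ε * (2 - Real.log (‖x‖ ^ 2) - ‖x‖ ^ 2) := by
    intro ε hε x hx
    by_contra hneg
    push Not at hneg
    set h : E N → ℝ := fun x =>
      u x * (‖x‖ ^ 2) ^ (-a) - t₁ + ε * (2 - Real.log (‖x‖ ^ 2) - ‖x‖ ^ 2) with hh
    have hx1 : ‖x‖ < 1 := by simpa using hx.1
    have hx0 : 0 < ‖x‖ := norm_pos_iff.mpr (by simpa using hx.2)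
    obtain ⟨δ, hδ0, hδx, hδ⟩ : ∃ δ : ℝ, 0 < δ ∧ δ ≤ ‖x‖ ∧ t₁ < ε * (1 - Real.log (δ ^ 2)) := by
      have hT : Tendsto Real.log (𝓝[>] 0) atBot := Real.tendsto_log_nhdsGT_zero
      have e1 := hT.eventually (eventually_lt_atBot ((1 - t₁ / ε) / 2))
      have e2 : ∀ᶠ δ : ℝ in 𝓝[>] 0, δ < ‖x‖ := nhdsWithin_le_nhds (gt_mem_nhds hx0)
      have e3 : ∀ᶠ δ : ℝ in 𝓝[>] 0, 0 < δ := self_mem_nhdsWithin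
      obtain ⟨δ, h1, h2, h3⟩ := (e1.and (e2.and e3)).exists
      refine ⟨δ, h3, h2.le, ?_⟩
      rw [Real.log_pow]
      push_cast
      have : t₁ / ε < 1 - 2 * Real.log δ := by linarith
      rw [div_lt_iff₀ hε] at this
      linarith
    set K : Set (E N) := closedBall 0 1 \ ball 0 δ with hK
    have hKc : IsCompact K := (isCompact_closedBall 0 1).diff isOpen_ball
    have hKm : ∀ y, y ∈ K ↔ ‖y‖ ≤ 1 ∧ δ ≤ ‖y‖ := by intro y; simp [hK]
    have hK0 : ∀ y ∈ K, 0 < ‖y‖ := fun y hy => hδ0.trans_le ((hKm y).1 hy).2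
    have hKs : K ⊆ closedBall 0 1 \ {0} := by
      intro y hy
      exact ⟨hy.1, by simpa using norm_pos_iff.mp (hK0 y hy)⟩
    have hcont : ContinuousOn h K := by
      have hu : ContinuousOn u K := hreg.continuousOn.mono hKs
      have hn : ContinuousOn (fun y : E N => ‖y‖ ^ 2) K := by fun_prop
      have hne : ∀ y ∈ K, ‖y‖ ^ 2 ≠ 0 := fun y hy => (pow_pos (hK0 y hy) 2).ne'
      have hr : ContinuousOn (fun y : E N => (‖y‖ ^ 2) ^ (-a)) K :=
        hn.rpow_const (fun y hy => Or.inl (hne y hy))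
      have hl : ContinuousOn (fun y : E N => Real.log (‖y‖ ^ 2)) K := hn.log hne
      exact ((hu.mul hr).sub continuousOn_const).add
        (continuousOn_const.mul ((continuousOn_const.sub hl).sub hn))
    obtain ⟨z, hzK, hz⟩ := hKc.exists_isMinOn ⟨x, (hKm x).2 ⟨hx1.le, hδx⟩⟩ hcont
    have hzneg : h z < 0 := lt_of_le_of_lt (hz ((hKm x).2 ⟨hx1.le, hδx⟩)) hneg
    have hz0 := hK0 z hzK
    have hzle := (hKm z).1 hzK
    have hz1 : ‖z‖ < 1 := by
      refine lt_of_le_of_ne hzle.1 fun h1 => ?_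
      have := hbdry z (by simpa using h1)
      have : h z = u z - t₁ + ε := by simp [hh, h1]; ring
      linarith
    have hzδ : δ < ‖z‖ := by
      refine lt_of_le_of_ne hzle.2 fun h1 => ?_
      have hu := hpos z (hKs hzK)
      have h2 : 0 ≤ u z * (‖z‖ ^ 2) ^ (-a) := by positivity
      have h3 : ‖z‖ ^ 2 ≤ 1 := by nlinarith
      have h4 : h z = u z * (‖z‖ ^ 2) ^ (-a) - t₁ + ε * (1 - Real.log (δ ^ 2))
          + ε * (1 - ‖z‖ ^ 2) := by simp only [hh, h1]; ring
      have : 0 ≤ ε * (1 - ‖z‖ ^ 2) := mul_nonneg hε.le (by linarith)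
      linarith
    have hKn : K ∈ 𝓝 z := by
      have o1 : ∀ᶠ y : E N in 𝓝 z, ‖y‖ < 1 := continuous_norm.continuousAt.eventually (gt_mem_nhds hz1)
      have o2 : ∀ᶠ y : E N in 𝓝 z, δ < ‖y‖ := continuous_norm.continuousAt.eventually (lt_mem_nhds hzδ)
      filter_upwards [o1, o2] with y h1 h2
      exact (hKm y).2 ⟨h1.le, h2.le⟩
    have hzne : z ≠ 0 := norm_pos_iff.mp hz0
    set c := h z + t₁ - 2 * ε with hc
    -- rewriting `h` in terms of the barrier
    have hform : ∀ y ∈ K, u y = (‖y‖ ^ 2) ^ a *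
        (h y + t₁ - 2 * ε + ε * Real.log (‖y‖ ^ 2) + ε * ‖y‖ ^ 2) := by
      intro y hy
      have hq : 0 < ‖y‖ ^ 2 := pow_pos (hK0 y hy) 2
      have h1 : (‖y‖ ^ 2) ^ a * (‖y‖ ^ 2) ^ (-a) = 1 := by
        rw [← Real.rpow_add hq]; simp
      have h2 : h y + t₁ - 2 * ε + ε * Real.log (‖y‖ ^ 2) + ε * ‖y‖ ^ 2 =
          u y * (‖y‖ ^ 2) ^ (-a) := by simp only [hh]; ring
      rw [h2, mul_left_comm, h1, mul_one]
    have hsm : ContDiffAt ℝ 2 (fun y : E N => (‖y‖ ^ 2) ^ a *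
        (c + ε * Real.log (‖y‖ ^ 2) + ε * ‖y‖ ^ 2)) z := by
      have hn : ContDiffAt ℝ 2 (fun y : E N => ‖y‖ ^ 2) z := (contDiff_norm_sq ℝ).contDiffAt
      have hne : ‖z‖ ^ 2 ≠ 0 := (pow_pos hz0 2).ne'
      exact (hn.rpow_const_of_ne hne).mul
        ((contDiffAt_const.add (contDiffAt_const.mul (hn.log hne))).add (contDiffAt_const.mul hn))
    have hux : ContDiffAt ℝ 2 u z := hreg.contDiffAt (Filter.mem_of_superset hKn hKs)
    have hle := ckn_le_of_touch μ₁ μ₂ hux hsm (hform z hzK) (by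
      filter_upwards [hKn] with y hy
      rw [hform y hy]
      have : h z ≤ h y := hz hy
      have hp : 0 ≤ (‖y‖ ^ 2) ^ a := by positivity
      exact mul_le_mul_of_nonneg_left (by linarith) hp)
    have hb := barrier_neg hμ₂l c ε hε hzne
    have hs := hsuper z ⟨by simpa using hz1, by simpa using hzne⟩
    linarith
  intro x hx
  have hx1 : ‖x‖ < 1 := by simpa using hx.1
  have hx0 : 0 < ‖x‖ := norm_pos_iff.mpr (by simpa using hx.2)
  have hq : 0 < ‖x‖ ^ 2 := pow_pos hx0 2
  have hlim : t₁ ≤ u x * (‖x‖ ^ 2) ^ (-a) := by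
    have hT : Tendsto (fun ε : ℝ => u x * (‖x‖ ^ 2) ^ (-a) - t₁
        + ε * (2 - Real.log (‖x‖ ^ 2) - ‖x‖ ^ 2)) (𝓝[>] 0) (𝓝 (u x * (‖x‖ ^ 2) ^ (-a) - t₁
        + 0 * (2 - Real.log (‖x‖ ^ 2) - ‖x‖ ^ 2))) :=
      (Continuous.tendsto (by fun_prop) 0).mono_left nhdsWithin_le_nhds
    have := ge_of_tendsto hT (by
      filter_upwards [self_mem_nhdsWithin] with ε hε
      exact key ε hε x hx)
    linarith
  have h1 : (‖x‖ ^ 2) ^ a * (‖x‖ ^ 2) ^ (-a) = 1 := by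
    rw [← Real.rpow_add hq]; simp
  have h2 : (‖x‖ ^ 2) ^ a = ‖x‖ ^ tauPlus N μ₁ μ₂ := by
    rw [← Real.rpow_natCast, ← Real.rpow_mul hx0.le, ha]
    congr 1
    push_cast
    ring
  have hp : 0 ≤ (‖x‖ ^ 2) ^ a := by positivity
  have h3 := mul_le_mul_of_nonneg_left hlim hp
  rw [mul_left_comm, h1, mul_one, h2] at h3
  linarith
end
end

section
/- Let N ≥ 2, μ₁ ∈ ℝ, μ₂ ≥ -(N-2-μ₁)²/4, r > 0, θ > -2, p > 0 and q₀ > 0. Let u ∈ C²(B_r \ {0}) be a positive function satisfying ℒ_{μ₁,μ₂}u(x) ≥ q₀|x|^{θ} u(x)^p in B_r \ {0} and u ≥ 0 on ∂B_r, and suppose u(x) ≥ d|x|^{τ} in B_r \ {0} for some d > 0 and τ ∈ ℝ such that pτ + θ + 2 ∈ (τ₋, τ₊). Then there exists d' > 0 such that u(x) ≥ d'|x|^{pτ + θ + 2} for all x ∈ B_{r/2} \ {0}. -/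
open MeasureTheory Filter Metric Set Topology

noncomputable section

lemma pow_hasFDerivAt {N : ℕ} (s : ℝ) {y : E N} (hy : y ≠ 0) :
    HasFDerivAt (fun z : E N => ‖z‖ ^ s) ((s * ‖y‖ ^ (s - 2)) • innerSL ℝ y) y := by
  have h1 : HasFDerivAt (fun z : E N => ‖z‖ ^ 2) (2 • innerSL ℝ y) y :=
    (hasStrictFDerivAt_norm_sq y).hasFDerivAt
  have hn : 0 < ‖y‖ := norm_pos_iff.mpr hy
  have h2 := h1.rpow_const (p := s / 2) (Or.inl (by positivity))
  have e : (fun z : E N => (‖z‖ ^ 2) ^ (s / 2)) = fun z : E N => ‖z‖ ^ s := by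
    funext z
    rw [← Real.rpow_natCast, ← Real.rpow_mul (norm_nonneg z)]
    congr 1; push_cast; ring
  rw [e] at h2
  have : (‖y‖ ^ 2) ^ (s / 2 - 1) = ‖y‖ ^ (s - 2) := by
    rw [← Real.rpow_natCast, ← Real.rpow_mul (norm_nonneg y)]
    congr 1; push_cast; ring
  rw [this] at h2
  have e2 : (s * ‖y‖ ^ (s - 2)) • innerSL ℝ y
      = (s / 2 * ‖y‖ ^ (s - 2)) • (2 • innerSL ℝ y) := by
    ext v
    simp
    ring
  rw [e2]
  exact h2

lemma pow_contDiffAt {N : ℕ} (s : ℝ) {y : E N} (hy : y ≠ 0) :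
    ContDiffAt ℝ 2 (fun z : E N => ‖z‖ ^ s) y :=
  (contDiffAt_norm ℝ hy).rpow_const_of_ne (norm_ne_zero_iff.mpr hy)

lemma lap_pow {N : ℕ} (s : ℝ) {x : E N} (hx : x ≠ 0) :
    lap N (fun z : E N => ‖z‖ ^ s) x = s * (s + N - 2) * ‖x‖ ^ (s - 2) := by
  have hn : 0 < ‖x‖ := norm_pos_iff.mpr hx
  have key : ∀ i : Fin N, fderiv ℝ (fun y => fderiv ℝ (fun z : E N => ‖z‖ ^ s) y
      (EuclideanSpace.single i 1)) x (EuclideanSpace.single i 1)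
      = s * ((s - 2) * ‖x‖ ^ (s - 2 - 2)) * x i ^ 2 + s * ‖x‖ ^ (s - 2) := by
    intro i
    have ev : (fun y => fderiv ℝ (fun z : E N => ‖z‖ ^ s) y (EuclideanSpace.single i 1))
        =ᶠ[𝓝 x] fun y => (s * ‖y‖ ^ (s - 2)) * EuclideanSpace.proj (𝕜 := ℝ) i y := by
      filter_upwards [isOpen_ne.mem_nhds hx] with y hy
      rw [(pow_hasFDerivAt s hy).fderiv]
      simp [EuclideanSpace.inner_single_right]
    rw [ev.fderiv_eq]
    have h := ((pow_hasFDerivAt (s - 2) hx).const_mul s).mul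
      (EuclideanSpace.proj (𝕜 := ℝ) i : E N →L[ℝ] ℝ).hasFDerivAt
    have h' := HasFDerivAt.fderiv h
    change fderiv ℝ (fun y => (s * ‖y‖ ^ (s - 2)) * EuclideanSpace.proj (𝕜 := ℝ) i y) x = _ at h'
    rw [h']
    simp [EuclideanSpace.inner_single_right]
    ring
  unfold lap
  rw [Finset.sum_congr rfl fun i _ => key i, Finset.sum_add_distrib, ← Finset.mul_sum,
    ← EuclideanSpace.real_norm_sq_eq]
  have : ‖x‖ ^ (s - 2 - 2) * ‖x‖ ^ 2 = ‖x‖ ^ (s - 2) := by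
    rw [← Real.rpow_natCast, ← Real.rpow_add hn]
    congr 1; push_cast; ring
  simp only [Finset.sum_const, Finset.card_univ, Fintype.card_fin, nsmul_eq_mul]
  linear_combination s * (s - 2) * this

lemma ckn_pow {N : ℕ} (μ₁ μ₂ s : ℝ) {x : E N} (hx : x ≠ 0) :
    ckn N μ₁ μ₂ (fun z : E N => ‖z‖ ^ s) x
      = (-(s * (s + N - 2)) + μ₁ * s + μ₂) * ‖x‖ ^ (s - 2) := by
  have hn : 0 < ‖x‖ := norm_pos_iff.mpr hx
  unfold ckn
  rw [lap_pow s hx, (pow_hasFDerivAt s hx).fderiv]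
  have h2 : ‖x‖ ^ s = ‖x‖ ^ (s - 2) * ‖x‖ ^ 2 := by
    rw [← Real.rpow_natCast, ← Real.rpow_add hn]
    congr 1; push_cast; ring
  beta_reduce
  rw [h2]
  simp
  field_simp

lemma fderiv_dir_diff {N : ℕ} {f : E N → ℝ} {x : E N} (hf : ContDiffAt ℝ 2 f x) (v : E N) :
    DifferentiableAt ℝ (fun y => fderiv ℝ f y v) x := by
  have h : ContDiffAt ℝ 1 (fderiv ℝ f) x := hf.fderiv_right (by norm_num)
  exact (h.differentiableAt (by norm_num)).clm_apply (differentiableAt_const v)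

lemma ev_diff {N : ℕ} {f : E N → ℝ} {x : E N} (hf : ContDiffAt ℝ 2 f x) :
    ∀ᶠ y in 𝓝 x, DifferentiableAt ℝ f y := by
  filter_upwards [hf.eventually (by simp)] with y hy
  exact hy.differentiableAt (by norm_num)

lemma ckn_add {N : ℕ} (μ₁ μ₂ : ℝ) {f g : E N → ℝ} {x : E N}
    (hf : ContDiffAt ℝ 2 f x) (hg : ContDiffAt ℝ 2 g x) :
    ckn N μ₁ μ₂ (fun y => f y + g y) x = ckn N μ₁ μ₂ f x + ckn N μ₁ μ₂ g x := by
  have hl : lap N (fun y => f y + g y) x = lap N f x + lap N g x := by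
    unfold lap
    rw [← Finset.sum_add_distrib]
    refine Finset.sum_congr rfl fun i _ => ?_
    have ev : (fun y => fderiv ℝ (fun z => f z + g z) y (EuclideanSpace.single i 1)) =ᶠ[𝓝 x]
        fun y => fderiv ℝ f y (EuclideanSpace.single i 1)
          + fderiv ℝ g y (EuclideanSpace.single i 1) := by
      filter_upwards [ev_diff hf, ev_diff hg] with y h1 h2
      rw [fderiv_fun_add h1 h2]; rfl
    rw [ev.fderiv_eq, fderiv_fun_add (fderiv_dir_diff hf _) (fderiv_dir_diff hg _)]; rfl
  unfold ckn
  rw [hl, fderiv_fun_add (ev_diff hf).self_of_nhds (ev_diff hg).self_of_nhds]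
  simp only [_root_.add_apply]
  ring

lemma ckn_const_mul {N : ℕ} (μ₁ μ₂ c : ℝ) {f : E N → ℝ} {x : E N}
    (hf : ContDiffAt ℝ 2 f x) :
    ckn N μ₁ μ₂ (fun y => c * f y) x = c * ckn N μ₁ μ₂ f x := by
  have hl : lap N (fun y => c * f y) x = c * lap N f x := by
    unfold lap
    rw [Finset.mul_sum]
    refine Finset.sum_congr rfl fun i _ => ?_
    have ev : (fun y => fderiv ℝ (fun z => c * f z) y (EuclideanSpace.single i 1)) =ᶠ[𝓝 x]
        fun y => c * fderiv ℝ f y (EuclideanSpace.single i 1) := by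
      filter_upwards [ev_diff hf] with y h1
      rw [fderiv_const_mul h1]; rfl
    rw [ev.fderiv_eq, fderiv_const_mul (fderiv_dir_diff hf _)]; rfl
  unfold ckn
  rw [hl, fderiv_const_mul (ev_diff hf).self_of_nhds]
  simp only [_root_.smul_apply, smul_eq_mul]
  ring

lemma lap_nonneg_of_isLocalMin {N : ℕ} {f : E N → ℝ} {x : E N}
    (hf : ContDiffAt ℝ 2 f x) (hm : IsLocalMin f x) : 0 ≤ lap N f x := by
  refine Finset.sum_nonneg fun i _ => ?_
  set v : E N := EuclideanSpace.single i 1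
  set l : ℝ → E N := fun t => x + t • v with hl
  have hld : ∀ t, HasDerivAt l v t := fun t => by
    have h := ((hasDerivAt_id t).smul_const v).const_add x
    rw [one_smul] at h
    exact h
  have hl0 : l 0 = x := by simp [hl]
  have hlc : Tendsto l (𝓝 0) (𝓝 x) := by
    have := (hld 0).continuousAt.tendsto
    rwa [hl0] at this
  by_contra! hneg
  have hd1 : deriv (fun t => f (l t)) =ᶠ[𝓝 0] fun t => fderiv ℝ f (l t) v := by
    filter_upwards [hlc.eventually (ev_diff hf)] with t ht
    exact (ht.hasFDerivAt.comp_hasDerivAt t (hld t)).deriv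
  have hd2 : deriv (deriv (fun t => f (l t))) 0 = fderiv ℝ (fun y => fderiv ℝ f y v) x v := by
    rw [hd1.deriv_eq]
    have h := fderiv_dir_diff hf v
    rw [← hl0] at h
    have := (h.hasFDerivAt.comp_hasDerivAt (0:ℝ) (hld 0)).deriv
    rw [hl0] at this
    exact this
  have hc : ContinuousAt (fun t => f (l t)) 0 := by
    have := hf.continuousAt
    rw [← hl0] at this
    exact this.comp (f := l) (hld 0).continuousAt
  have hmin : IsLocalMin (fun t => f (l t)) 0 := by
    have := hlc.eventually hm
    simpa [IsLocalMin, IsMinFilter, hl0] using this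
  have hmax : IsLocalMax (fun t => f (l t)) 0 :=
    isLocalMax_of_deriv_deriv_neg (by rw [hd2]; exact hneg) hmin.deriv_eq_zero hc
  have heq : (fun t => f (l t)) =ᶠ[𝓝 0] fun _ => f (l 0) := by
    filter_upwards [hmin, hmax] with t h1 h2
    exact le_antisymm h2 h1
  have h0 : deriv (deriv (fun t => f (l t))) 0 = 0 := by
    rw [heq.deriv.deriv_eq]; simp
  rw [hd2] at h0
  linarith

lemma ckn_nonpos_of_min {N : ℕ} (μ₁ μ₂ : ℝ) {f : E N → ℝ} {x : E N}
    (hf : ContDiffAt ℝ 2 f x) (hm : IsLocalMin f x) (h0 : f x = 0) :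
    ckn N μ₁ μ₂ f x ≤ 0 := by
  unfold ckn
  rw [hm.fderiv_eq_zero, h0]
  simpa using lap_nonneg_of_isLocalMin hf hm

/-- iteration step improving the lower bound of a positive
supersolution of `ℒ_{μ₁,μ₂} u ≥ q₀|x|^θ u^p` from `d|x|^τ` to `d'|x|^{pτ+θ+2}`. -/
theorem stmt15 (N : ℕ) (hN : 2 ≤ N) (μ₁ μ₂ : ℝ)
    (hμ₂ : -((N : ℝ) - 2 - μ₁) ^ 2 / 4 ≤ μ₂)
    (r θ p q₀ : ℝ) (hr : 0 < r) (hθ : -2 < θ) (hp : 0 < p) (hq₀ : 0 < q₀)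
    (u : E N → ℝ) (hreg : ContDiffOn ℝ 2 u (ball (0 : E N) r \ {0}))
    (hpos : ∀ x ∈ ball (0 : E N) r \ {0}, 0 < u x)
    (hineq : ∀ x ∈ ball (0 : E N) r \ {0},
      q₀ * ‖x‖ ^ θ * u x ^ p ≤ ckn N μ₁ μ₂ u x)
    (hbdry : ∀ x ∈ sphere (0 : E N) r, 0 ≤ u x)
    (d τ : ℝ) (hd : 0 < d)
    (hlow : ∀ x ∈ ball (0 : E N) r \ {0}, d * ‖x‖ ^ τ ≤ u x)
    (hτ : p * τ + θ + 2 ∈ Set.Ioo (tauMinus N μ₁ μ₂) (tauPlus N μ₁ μ₂)) :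
    ∃ d' > (0 : ℝ), ∀ x ∈ ball (0 : E N) (r / 2) \ {0},
      d' * ‖x‖ ^ (p * τ + θ + 2) ≤ u x := by
  set σ := p * τ + θ + 2 with hσ
  set a := tauMinus N μ₁ μ₂ with ha
  obtain ⟨h1, h2⟩ := hτ
  have hD : 0 ≤ (2 - (N : ℝ) + μ₁) ^ 2 + 4 * μ₂ := by nlinarith
  have hsq := Real.sq_sqrt hD
  have hc : 0 < -(σ * (σ + N - 2)) + μ₁ * σ + μ₂ := by
    have := mul_pos (sub_pos.mpr h1) (sub_pos.mpr h2)
    rw [ha] at this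
    unfold tauMinus tauPlus at this
    nlinarith
  have ha0 : -(a * (a + N - 2)) + μ₁ * a + μ₂ = 0 := by
    rw [ha]
    unfold tauMinus
    nlinarith
  set c := -(σ * (σ + N - 2)) + μ₁ * σ + μ₂ with hcdef
  have hopen : IsOpen (ball (0 : E N) r \ {0}) := isOpen_ball.sdiff isClosed_singleton
  have hC2 : ∀ x ∈ ball (0 : E N) r \ {0}, ContDiffAt ℝ 2 u x := fun x hx =>
    hreg.contDiffAt (hopen.mem_nhds hx)
  have hR : 0 < r / 2 := by positivity
  have hmem : ∀ y : E N, 0 < ‖y‖ → ‖y‖ ≤ r / 2 → y ∈ ball (0 : E N) r \ {0} := by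
    intro y h0 hy
    refine ⟨by rw [mem_ball_zero_iff]; linarith, ?_⟩
    simpa using norm_pos_iff.mp h0
  obtain ⟨m, hm0, hm⟩ : ∃ m, 0 < m ∧ ∀ y ∈ sphere (0 : E N) (r / 2), m ≤ u y := by
    have hs : ∀ y ∈ sphere (0 : E N) (r / 2), y ∈ ball (0 : E N) r \ {0} := by
      intro y hy
      rw [mem_sphere_zero_iff_norm] at hy
      exact hmem y (by rw [hy]; exact hR) hy.le
    exact (isCompact_sphere (0 : E N) (r / 2)).exists_forall_le'
      (fun y hy => (hC2 y (hs y hy)).continuousAt.continuousWithinAt) fun y hy => hpos y (hs y hy)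
  have hdp : 0 < d ^ p := Real.rpow_pos_of_pos hd p
  have hRσ : 0 < (r / 2) ^ σ := Real.rpow_pos_of_pos hR σ
  set d' := min (q₀ * d ^ p / c) (m / (r / 2) ^ σ) with hd'
  have hd'0 : 0 < d' := lt_min (by positivity) (by positivity)
  refine ⟨d', hd'0, fun x hx => ?_⟩
  have hxn : 0 < ‖x‖ := norm_pos_iff.mpr (by simpa using hx.2)
  have hxR : ‖x‖ < r / 2 := by simpa using hx.1
  have hxa : 0 < ‖x‖ ^ a := Real.rpow_pos_of_pos hxn a
  suffices H : ∀ ε > 0, d' * ‖x‖ ^ σ ≤ u x + ε * ‖x‖ ^ a by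
    refine le_of_forall_pos_le_add fun ε hε => ?_
    have := H (ε / ‖x‖ ^ a) (by positivity)
    rwa [div_mul_cancel₀ _ hxa.ne'] at this
  intro ε hε
  obtain ⟨δ, hδ0, hδx, hδ⟩ : ∃ δ, 0 < δ ∧ δ < ‖x‖ ∧ d' * δ ^ (σ - a) < ε := by
    have hcont : ContinuousAt (fun t : ℝ => d' * t ^ (σ - a)) 0 :=
      (Real.continuousAt_rpow_const 0 (σ - a) (Or.inr (by linarith))).const_mul d'
    have h0 : d' * (0 : ℝ) ^ (σ - a) < ε := by
      rw [Real.zero_rpow (by linarith)]; simpa using hε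
    have e1 := (hcont.eventually_lt_const h0).filter_mono
      (nhdsWithin_le_nhds (s := Ioi (0 : ℝ)))
    have e2 : ∀ᶠ t in 𝓝[>] (0 : ℝ), t < ‖x‖ :=
      (eventually_lt_nhds hxn).filter_mono nhdsWithin_le_nhds
    obtain ⟨δ, k1, k2, k3⟩ := (e1.and (e2.and self_mem_nhdsWithin)).exists
    exact ⟨δ, k3, k2, k1⟩
  set K : Set (E N) := closedBall 0 (r / 2) \ ball 0 δ with hK
  have hKmem : ∀ y, y ∈ K ↔ ‖y‖ ≤ r / 2 ∧ δ ≤ ‖y‖ := by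
    intro y; simp [hK]
  have hKc : IsCompact K := (isCompact_closedBall (0 : E N) (r / 2)).diff isOpen_ball
  have hxK : x ∈ K := (hKmem x).2 ⟨hxR.le, hδx.le⟩
  have hKr : ∀ y ∈ K, y ∈ ball (0 : E N) r \ {0} := fun y hy =>
    hmem y (hδ0.trans_le ((hKmem y).1 hy).2) ((hKmem y).1 hy).1
  have hKn : ∀ y ∈ K, y ≠ 0 := fun y hy => by simpa using (hKr y hy).2
  have hgc : ContinuousOn (fun y => (u y + ε * ‖y‖ ^ a) / ‖y‖ ^ σ) K := by
    intro y hy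
    have hy0 := hKn y hy
    have hyp : 0 < ‖y‖ ^ σ := Real.rpow_pos_of_pos (norm_pos_iff.mpr hy0) σ
    exact (((hC2 y (hKr y hy)).continuousAt.add
      ((pow_contDiffAt a hy0).continuousAt.const_mul ε)).div
      (pow_contDiffAt σ hy0).continuousAt hyp.ne').continuousWithinAt
  obtain ⟨x₀, hx₀K, hmin⟩ := hKc.exists_isMinOn ⟨x, hxK⟩ hgc
  have hx₀0 := hKn x₀ hx₀K
  have hx₀r := hKr x₀ hx₀K
  have hn0 : 0 < ‖x₀‖ := norm_pos_iff.mpr hx₀0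
  have hnσ : 0 < ‖x₀‖ ^ σ := Real.rpow_pos_of_pos hn0 σ
  have hna : 0 < ‖x₀‖ ^ a := Real.rpow_pos_of_pos hn0 a
  have hu0 := hpos x₀ hx₀r
  have claim : d' ≤ (u x₀ + ε * ‖x₀‖ ^ a) / ‖x₀‖ ^ σ := by
    obtain ⟨b1, b2⟩ := (hKmem x₀).1 hx₀K
    rcases b1.eq_or_lt with b1 | b1
    · have := hm x₀ (by simpa using b1)
      rw [b1] at hna ⊢
      refine (min_le_right _ _).trans ?_
      gcongr
      nlinarith [mul_pos hε hna]
    rcases b2.eq_or_lt with b2 | b2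
    · rw [le_div_iff₀ hnσ]
      have e : ‖x₀‖ ^ σ = ‖x₀‖ ^ (σ - a) * ‖x₀‖ ^ a := by
        rw [← Real.rpow_add hn0]; congr 1; ring
      rw [b2] at hδ
      rw [e, ← mul_assoc]
      nlinarith [mul_lt_mul_of_pos_right hδ hna]
    set k := (u x₀ + ε * ‖x₀‖ ^ a) / ‖x₀‖ ^ σ with hk
    refine (min_le_left _ _).trans ?_
    rw [div_le_iff₀ hc]
    have hKnhds : ∀ᶠ y in 𝓝 x₀, y ∈ K := by
      have c1 := continuous_norm.continuousAt.eventually_lt_const b1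
      have c2 := continuous_norm.continuousAt.eventually_const_lt b2
      filter_upwards [c1, c2] with y y1 y2
      exact (hKmem y).2 ⟨y1.le, y2.le⟩
    have f1 := hC2 x₀ hx₀r
    have f2 : ContDiffAt ℝ 2 (fun y : E N => ε * ‖y‖ ^ a) x₀ :=
      contDiffAt_const.mul (pow_contDiffAt a hx₀0)
    have f3 : ContDiffAt ℝ 2 (fun y : E N => (-k) * ‖y‖ ^ σ) x₀ :=
      contDiffAt_const.mul (pow_contDiffAt σ hx₀0)
    have f12 : ContDiffAt ℝ 2 (fun y : E N => u y + ε * ‖y‖ ^ a) x₀ := f1.add f2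
    have f0 : u x₀ + ε * ‖x₀‖ ^ a + (-k) * ‖x₀‖ ^ σ = 0 := by
      rw [hk]; field_simp; ring
    have hloc : IsLocalMin (fun y : E N => u y + ε * ‖y‖ ^ a + (-k) * ‖y‖ ^ σ) x₀ := by
      filter_upwards [hKnhds] with y hy
      rw [f0]
      have hyσ : 0 < ‖y‖ ^ σ := Real.rpow_pos_of_pos (norm_pos_iff.mpr (hKn y hy)) σ
      have hle : k ≤ (u y + ε * ‖y‖ ^ a) / ‖y‖ ^ σ := hmin hy
      rw [le_div_iff₀ hyσ] at hle
      linarith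
    have hL := ckn_nonpos_of_min μ₁ μ₂ (f12.add f3) hloc f0
    change ckn N μ₁ μ₂ (fun y : E N => u y + ε * ‖y‖ ^ a + (-k) * ‖y‖ ^ σ) x₀ ≤ 0 at hL
    rw [ckn_add μ₁ μ₂ f12 f3, ckn_add μ₁ μ₂ f1 f2,
      ckn_const_mul μ₁ μ₂ ε (pow_contDiffAt a hx₀0),
      ckn_const_mul μ₁ μ₂ (-k) (pow_contDiffAt σ hx₀0),
      ckn_pow μ₁ μ₂ a hx₀0, ckn_pow μ₁ μ₂ σ hx₀0, ha0, ← hcdef] at hL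
    have hi := hineq x₀ hx₀r
    have hup : d ^ p * ‖x₀‖ ^ (p * τ) ≤ u x₀ ^ p := by
      have := Real.rpow_le_rpow (by positivity) (hlow x₀ hx₀r) hp.le
      rwa [Real.mul_rpow hd.le (by positivity), ← Real.rpow_mul hn0.le, mul_comm τ p] at this
    have e : ‖x₀‖ ^ (σ - 2) = ‖x₀‖ ^ θ * ‖x₀‖ ^ (p * τ) := by
      rw [← Real.rpow_add hn0]; congr 1; rw [hσ]; ring
    have hP : 0 < ‖x₀‖ ^ (σ - 2) := Real.rpow_pos_of_pos hn0 _
    have hi2 : q₀ * d ^ p * ‖x₀‖ ^ (σ - 2) ≤ q₀ * ‖x₀‖ ^ θ * u x₀ ^ p := by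
      have := mul_le_mul_of_nonneg_left hup
        (by positivity : 0 ≤ q₀ * ‖x₀‖ ^ θ)
      rw [e]
      linarith
    have : (q₀ * d ^ p) * ‖x₀‖ ^ (σ - 2) ≤ (k * c) * ‖x₀‖ ^ (σ - 2) := by
      linarith
    exact le_of_mul_le_mul_right this hP
  have hfin : (u x₀ + ε * ‖x₀‖ ^ a) / ‖x₀‖ ^ σ ≤ (u x + ε * ‖x‖ ^ a) / ‖x‖ ^ σ := hmin hxK
  have := claim.trans hfin
  rwa [le_div_iff₀ (Real.rpow_pos_of_pos hxn σ)] at this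
end
end
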